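/- Let M=(Q,V,δ,q₀,F) be a DFAwtl. If M accepts some input with at least #Q jumps (i.e., there exists w∈L(M) with jc_M(w) ≥ #Q), then there exist words α,β∈V* and a nonempty word x∈V⁺ such that for every n≥1 the word α·xⁿ·β belongs to L(M) and jc_M(α·xⁿ·β) ≥ n; consequently JC_M(n) ∈ Ω(n). -/

import Mathlib

/-- A deterministic finite automaton with translucent letters (DFAwtl):
`delta` is a partial transition function, `start` the initial state,
`accept` the set of final states. -/
structure DFAwtl (Q V : Type*) where
  delta : Q → V → Option Q
  start : Q
  accept : Set Q

namespace DFAwtl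

variable {Q V : Type*}

/-- Sequential step: `(s, a·y) → (p, y)` when `δ(s,a) = p`. -/
def SeqStep (M : DFAwtl Q V) (c c' : Q × List V) : Prop :=
  ∃ a : V, c.2 = a :: c'.2 ∧ M.delta c.1 a = some c'.1

/-- Jumping step: `(s, x·a·y) ↻ (p, x·y)` when `x ≠ ε`, `δ(s,a) = p`, and
`δ(s,b)` is undefined for every letter `b` occurring in `x`. -/
def JumpStep (M : DFAwtl Q V) (c c' : Q × List V) : Prop :=
  ∃ (x y : List V) (a : V), x ≠ [] ∧ c.2 = x ++ a :: y ∧ c'.2 = x ++ y ∧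
    M.delta c.1 a = some c'.1 ∧ ∀ b ∈ x, M.delta c.1 b = none

/-- Either a sequential or a jumping step. -/
def Step (M : DFAwtl Q V) (c c' : Q × List V) : Prop :=
  M.SeqStep c c' ∨ M.JumpStep c c'

/-- Reflexive–transitive closure of sequential steps (the relation `→*`). -/
def SeqSteps (M : DFAwtl Q V) : Q × List V → Q × List V → Prop :=
  Relation.ReflTransGen M.SeqStep

/-- Reflexive–transitive closure of all steps (the relation `⊨*`). -/
def Steps (M : DFAwtl Q V) : Q × List V → Q × List V → Prop :=
  Relation.ReflTransGen M.Step

/-- `StepsN M c c' k` : configuration `c'` is reachable from `c` by a computation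
containing exactly `k` jumping steps. -/
inductive StepsN (M : DFAwtl Q V) : Q × List V → Q × List V → ℕ → Prop
  | refl (c : Q × List V) : StepsN M c c 0
  | seq {c c' c'' : Q × List V} {n : ℕ} :
      M.SeqStep c c' → StepsN M c' c'' n → StepsN M c c'' n
  | jump {c c' c'' : Q × List V} {n : ℕ} :
      M.JumpStep c c' → StepsN M c' c'' n → StepsN M c c'' (n + 1)

/-- The language accepted by `M`. -/
def lang (M : DFAwtl Q V) : Set (List V) :=
  {w | ∃ f ∈ M.accept, M.Steps (M.start, w) (f, [])}

/-- `M` accepts `w` by a computation with exactly `k` jumping steps. -/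
def AcceptsIn (M : DFAwtl Q V) (w : List V) (k : ℕ) : Prop :=
  ∃ f ∈ M.accept, M.StepsN (M.start, w) (f, []) k

/-- The jump complexity of a word: the (for a deterministic machine, unique)
number of jumping steps in an accepting computation on `w`. -/
noncomputable def jc (M : DFAwtl Q V) (w : List V) : ℕ :=
  sInf {k | M.AcceptsIn w k}

/-- The jump complexity function: the maximal number of jumps over accepted
words of length `n`. -/
noncomputable def JC (M : DFAwtl Q V) (n : ℕ) : ℕ :=
  sSup {k | ∃ w ∈ M.lang, w.length = n ∧ M.jc w = k}

/-- `JC_M` is bounded by a constant. -/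
def ConstBounded (M : DFAwtl Q V) : Prop :=
  ∃ c : ℕ, ∀ w ∈ M.lang, M.jc w ≤ c

/-- Extended (sequential) transition function on words. -/
def deltaStar (M : DFAwtl Q V) (q : Q) (w : List V) : Option Q :=
  w.foldl (fun o a => o.bind fun p => M.delta p a) (some q)

/-- A state `q` is `a`-deficient if `δ(q,a)` is undefined. -/
def Deficient (M : DFAwtl Q V) (q : Q) (a : V) : Prop :=
  M.delta q a = none

/-- The set `⟨q,a⟩` (empty when `δ(q,a)` is defined). -/
def angleSet (M : DFAwtl Q V) (q : Q) (a : V) : Set Q :=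
  {s | M.delta q a = none ∧ ∃ x : List V, x ≠ [] ∧
    M.SeqSteps (q, x) (s, []) ∧ M.Steps (s, a :: x) (q, [])}

/-- The set `[q,a]` (empty when `δ(q,a)` is defined). -/
def bracketSet (M : DFAwtl Q V) (q : Q) (a : V) : Set Q :=
  {s | M.delta q a = none ∧ ∃ x : List V, x ≠ [] ∧
    M.SeqSteps (q, x) (s, []) ∧ M.SeqSteps (s, a :: x) (q, [])}

/-- Every state of the automaton is useful. -/
def AllUseful (M : DFAwtl Q V) : Prop :=
  ∀ q : Q, (∃ x : List V, M.SeqSteps (M.start, x) (q, [])) ∧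
    (∃ (y : List V) (f : Q), f ∈ M.accept ∧ M.SeqSteps ((q : Q), y) (f, []))

/-- `δ(q,x')` is `a`-deficient for every prefix `x'` of `x`. -/
def PrefixDeficient (M : DFAwtl Q V) (q : Q) (a : V) (x : List V) : Prop :=
  ∀ x' : List V, ∀ p : Q, x' <+: x → M.deltaStar q x' = some p → M.delta p a = none

/-- `δ(q,y')` is `a`-deficient for every proper prefix `y'` of `y`. -/
def ProperPrefixDeficient (M : DFAwtl Q V) (q : Q) (a : V) (y : List V) : Prop :=
  ∀ y' : List V, ∀ p : Q, y' <+: y → y' ≠ y → M.deltaStar q y' = some p → M.delta p a = none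

/-- The condition of Claim 2: a pair `(q,a)` with `δ(q,a)` undefined, a nonempty
cycle in `q` visiting only `a`-deficient states, and an accepting path from `q`
reading a word `y` without `a` through `a`-deficient states and then an `a`. -/
def ClaimTwoCondition (M : DFAwtl Q V) (q : Q) (a : V) : Prop :=
  M.delta q a = none ∧
  (∃ x : List V, x ≠ [] ∧ M.SeqSteps (q, x) (q, []) ∧ M.PrefixDeficient q a x) ∧
  (∃ (y z : List V) (f : Q), a ∉ y ∧ f ∈ M.accept ∧
    M.SeqSteps (q, y ++ a :: z) (f, []) ∧ M.ProperPrefixDeficient q a y)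

end DFAwtl

namespace DFAwtl

variable {Q V : Type*}

/-- `p 0, p 1, …, p n = p 0` is a circuit in the transition graph of `M`,
with the `i`-th edge labelled by the letter `a i`. -/
def IsCircuit (M : DFAwtl Q V) (n : ℕ) (p : ℕ → Q) (a : ℕ → V) : Prop :=
  0 < n ∧ p n = p 0 ∧ ∀ i < n, M.delta (p i) (a i) = some (p (i + 1))

/-- The circuit is `x`-jumping: every state of the circuit from which an `x` is read
is `b`-deficient for some letter `b`, and at least one edge is labelled by a letter
other than `x`. -/
def IsXJumpingCircuit (M : DFAwtl Q V) (n : ℕ) (p : ℕ → Q) (a : ℕ → V) (x : V) : Prop :=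
  M.IsCircuit n p a ∧ (∀ i < n, a i = x → ∃ b : V, M.delta (p i) b = none) ∧
    ∃ i < n, a i ≠ x

/-- The state `q` is reachable from the initial state. -/
def ReachableState (M : DFAwtl Q V) (q : Q) : Prop :=
  ∃ u : List V, M.Steps (M.start, u) (q, [])

end DFAwtl
-- end preamble

/-!
An accepting computation with at least `#Q` jumps leaves at least `#Q` states by a jump and then
reaches its final state; two of these states coincide, so some state `s` is left by a jump and
visited again later.

Let `b` be the first letter of the tape at that jump. While `b` stays in front, every step skips
`b`, so the letters read can be moved directly behind `b`; once `b` has been read, the remaining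
letters can be moved to the front. Rearranged in this way, the loop leads from `(s, g·x)` to
`(s, g)` with at least one jump, where `g` is `b` or empty and is a prefix of the tape on the second
visit. The loop can therefore be iterated in front of the rest of that tape.
-/

namespace DFAwtl

variable {Q V : Type*} {M : DFAwtl Q V} {c d e : Q × List V} {k m : ℕ}

/-- A step that reads the first letter after the translucent prefix `x`. Sequential steps are the
case `x = ε` and jumping steps the case `x ≠ ε`, which lets both be treated at once. -/
def SkipStep (M : DFAwtl Q V) (x : List V) (c d : Q × List V) : Prop :=
  ∃ (a : V) (y : List V), c.2 = x ++ a :: y ∧ d.2 = x ++ y ∧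
    M.delta c.1 a = some d.1 ∧ ∀ b ∈ x, M.delta c.1 b = none

theorem seqStep_iff_skipStep_nil : M.SeqStep c d ↔ M.SkipStep [] c d := by
  constructor
  · rintro ⟨a, hc, ha⟩
    exact ⟨a, d.2, hc, rfl, ha, by simp⟩
  · rintro ⟨a, y, hc, hd, ha, -⟩
    exact ⟨a, by simpa [hd] using hc, ha⟩

theorem jumpStep_iff_exists_skipStep : M.JumpStep c d ↔ ∃ x ≠ [], M.SkipStep x c d := by
  constructor
  · rintro ⟨x, y, a, hx, h⟩
    exact ⟨x, hx, a, y, h⟩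
  · rintro ⟨x, hx, a, y, h⟩
    exact ⟨x, y, a, hx, h⟩

theorem step_iff_exists_skipStep : M.Step c d ↔ ∃ x, M.SkipStep x c d := by
  rw [Step, seqStep_iff_skipStep_nil, jumpStep_iff_exists_skipStep]
  constructor
  · rintro (h | ⟨x, -, h⟩)
    exacts [⟨[], h⟩, ⟨x, h⟩]
  · rintro ⟨x, h⟩
    rcases eq_or_ne x [] with rfl | hx
    exacts [.inl h, .inr ⟨x, hx, h⟩]

namespace SkipStep

variable {x x' : List V} {d' : Q × List V}

theorem takeWhile_isNone_eq (h : M.SkipStep x c d) :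
    c.2.takeWhile (fun b => (M.delta c.1 b).isNone) = x := by
  obtain ⟨a, y, hc, -, ha, hx⟩ := h
  rw [hc, List.takeWhile_append_of_pos (by simpa using hx),
    List.takeWhile_cons_of_neg (by simp [ha]), List.append_nil]

theorem prefix_unique (h : M.SkipStep x c d) (h' : M.SkipStep x' c d') : x = x' :=
  h.takeWhile_isNone_eq.symm.trans h'.takeWhile_isNone_eq

theorem target_unique (h : M.SkipStep x c d) (h' : M.SkipStep x c d') : d = d' := by
  obtain ⟨a, y, hc, hd, ha, -⟩ := h
  obtain ⟨a', y', hc', hd', ha', -⟩ := h'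
  obtain ⟨rfl, rfl⟩ : a = a' ∧ y = y' := by
    simpa using List.append_cancel_left (hc.symm.trans hc')
  exact Prod.ext (Option.some_injective _ (ha.symm.trans ha')) (hd.trans hd'.symm)

theorem append_right (h : M.SkipStep x c d) (t : List V) :
    M.SkipStep x (c.1, c.2 ++ t) (d.1, d.2 ++ t) := by
  obtain ⟨a, y, hc, hd, h⟩ := h
  exact ⟨a, y ++ t, by simp [hc], by simp [hd], h⟩

end SkipStep

theorem Step.length_eq (h : M.Step c d) : c.2.length = d.2.length + 1 := by
  obtain ⟨x, a, y, hc, hd, -⟩ := step_iff_exists_skipStep.1 h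
  simp [hc, hd, add_assoc]

theorem Step.exists_delta (h : M.Step c d) : ∃ a, M.delta c.1 a = some d.1 := by
  obtain ⟨_, a, _, _, _, ha, _⟩ := step_iff_exists_skipStep.1 h
  exact ⟨a, ha⟩

theorem SeqStep.append_right (h : M.SeqStep c d) (t : List V) :
    M.SeqStep (c.1, c.2 ++ t) (d.1, d.2 ++ t) :=
  seqStep_iff_skipStep_nil.2 ((seqStep_iff_skipStep_nil.1 h).append_right t)

theorem JumpStep.append_right (h : M.JumpStep c d) (t : List V) :
    M.JumpStep (c.1, c.2 ++ t) (d.1, d.2 ++ t) := by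
  obtain ⟨x, hx, h⟩ := jumpStep_iff_exists_skipStep.1 h
  exact jumpStep_iff_exists_skipStep.2 ⟨x, hx, h.append_right t⟩

theorem SeqStep.unique (h : M.SeqStep c d) (h' : M.SeqStep c e) : d = e :=
  (seqStep_iff_skipStep_nil.1 h).target_unique (seqStep_iff_skipStep_nil.1 h')

theorem JumpStep.unique (h : M.JumpStep c d) (h' : M.JumpStep c e) : d = e := by
  obtain ⟨x, -, h⟩ := jumpStep_iff_exists_skipStep.1 h
  obtain ⟨x', -, h'⟩ := jumpStep_iff_exists_skipStep.1 h'
  obtain rfl := h.prefix_unique h'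
  exact h.target_unique h'

theorem SeqStep.not_jumpStep (h : M.SeqStep c d) : ¬ M.JumpStep c e := by
  intro h'
  obtain ⟨x, hx, h'⟩ := jumpStep_iff_exists_skipStep.1 h'
  exact hx (h'.prefix_unique (seqStep_iff_skipStep_nil.1 h))

namespace StepsN

theorem trans (h : M.StepsN c d k) (h' : M.StepsN d e m) : M.StepsN c e (k + m) := by
  induction h with
  | refl => simpa only [zero_add] using h'
  | seq hs _ ih => exact .seq hs (ih h')
  | jump hs _ ih => simpa only [Nat.add_right_comm] using StepsN.jump hs (ih h')

theorem steps (h : M.StepsN c d k) : M.Steps c d := by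
  induction h with
  | refl => exact .refl
  | seq hs _ ih => exact .head (.inl hs) ih
  | jump hs _ ih => exact .head (.inr hs) ih

theorem append_right (h : M.StepsN c d k) (t : List V) :
    M.StepsN (c.1, c.2 ++ t) (d.1, d.2 ++ t) k := by
  induction h with
  | refl => exact .refl _
  | seq hs _ ih => exact .seq (hs.append_right t) ih
  | jump hs _ ih => exact .jump (hs.append_right t) ih

theorem cons {p q : Q} {a : V} {x : List V} (ha : M.delta p a = some q)
    (h : M.StepsN (q, x) d k) : M.StepsN (p, a :: x) d k :=
  .seq ⟨a, rfl, ha⟩ h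

theorem add_length_le (h : M.StepsN c d k) : k + d.2.length ≤ c.2.length := by
  induction h with
  | refl => simp only [zero_add, le_refl]
  | seq hs _ ih =>
    have := Step.length_eq (.inl hs)
    omega
  | jump hs _ ih =>
    have := Step.length_eq (.inr hs)
    omega

theorem jumps_unique {f f' : Q} (h : M.StepsN c (f, []) k) (h' : M.StepsN c (f', []) m) :
    k = m := by
  generalize he : (f, ([] : List V)) = e at h
  induction h generalizing m with
  | refl =>
    subst he
    simpa [eq_comm] using h'.add_length_le
  | seq hs _ ih =>
    cases h' with
    | refl => simpa using Step.length_eq (.inl hs)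
    | seq hs' h' => exact ih (hs.unique hs' ▸ h') he
    | jump hs' _ => exact absurd hs' hs.not_jumpStep
  | jump hs _ ih =>
    cases h' with
    | refl => simpa using Step.length_eq (.inr hs)
    | seq hs' _ => exact absurd hs hs'.not_jumpStep
    | jump hs' h' => rw [ih (hs.unique hs' ▸ h') he]

end StepsN

theorem Steps.exists_stepsN (h : M.Steps c d) : ∃ k, M.StepsN c d k := by
  induction h using Relation.ReflTransGen.head_induction_on with
  | refl => exact ⟨0, .refl _⟩
  | head hs _ ih =>
    obtain ⟨k, hk⟩ := ih
    rcases hs with hs | hs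
    exacts [⟨k, .seq hs hk⟩, ⟨k + 1, .jump hs hk⟩]

section JumpComplexity

variable {w : List V}

theorem AcceptsIn.jc_eq (h : M.AcceptsIn w k) : M.jc w = k := by
  obtain ⟨f, hf, hk⟩ := h
  have : {j | M.AcceptsIn w j} = {k} :=
    Set.eq_singleton_iff_unique_mem.2
      ⟨⟨f, hf, hk⟩, fun j ⟨_, _, hj⟩ => hj.jumps_unique hk⟩
  rw [jc, this, csInf_singleton]

theorem AcceptsIn.mem_lang (h : M.AcceptsIn w k) : w ∈ M.lang := by
  obtain ⟨f, hf, hk⟩ := h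
  exact ⟨f, hf, hk.steps⟩

theorem acceptsIn_jc (h : w ∈ M.lang) : M.AcceptsIn w (M.jc w) := by
  obtain ⟨f, hf, h⟩ := h
  obtain ⟨k, hk⟩ := h.exists_stepsN
  have hacc : M.AcceptsIn w k := ⟨f, hf, hk⟩
  rwa [hacc.jc_eq]

theorem jc_le_length (h : w ∈ M.lang) : M.jc w ≤ w.length := by
  obtain ⟨f, -, hk⟩ := acceptsIn_jc h
  simpa using hk.add_length_le

theorem jc_le_JC (h : w ∈ M.lang) : M.jc w ≤ M.JC w.length := by
  refine le_csSup ⟨w.length, ?_⟩ ⟨w, h, rfl, rfl⟩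
  rintro _ ⟨v, hv, hlen, rfl⟩
  exact hlen ▸ jc_le_length hv

end JumpComplexity

/-- The list consists of the configurations left by a jump, followed by `e`. -/
theorem StepsN.exists_pairwise_jumpStep_comp_steps (h : M.StepsN c e k) :
    ∃ l : List (Q × List V), l.length = k + 1 ∧ (∀ d ∈ l, M.Steps c d ∧ M.Steps d e) ∧
      l.Pairwise (Relation.Comp M.JumpStep M.Steps) := by
  induction h with
  | refl c => exact ⟨[c], rfl, by simp [Steps, Relation.ReflTransGen.refl], by simp⟩
  | seq hs _ ih =>
    obtain ⟨l, hlen, hmem, hl⟩ := ih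
    exact ⟨l, hlen, fun d hd => ⟨.head (.inl hs) (hmem d hd).1, (hmem d hd).2⟩, hl⟩
  | @jump c c' e _ hs hr ih =>
    obtain ⟨l, hlen, hmem, hl⟩ := ih
    refine ⟨c :: l, by simp [hlen], ?_, .cons (fun d hd => ⟨c', hs, (hmem d hd).1⟩) hl⟩
    rintro d (_ | ⟨_, hd⟩)
    · exact ⟨.refl, .head (.inr hs) hr.steps⟩
    · exact ⟨.head (.inr hs) (hmem d hd).1, (hmem d hd).2⟩

theorem StepsN.exists_jumpStep_and_return [Fintype Q] (h : M.StepsN c e k)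
    (hk : Fintype.card Q ≤ k) :
    ∃ s u v d, M.Steps c (s, u) ∧ M.JumpStep (s, u) d ∧ M.Steps d (s, v) ∧
      M.Steps (s, v) e := by
  obtain ⟨l, hlen, hmem, hl⟩ := h.exists_pairwise_jumpStep_comp_steps
  by_contra hnone
  have hnodup : (l.map Prod.fst).Nodup := by
    refine List.pairwise_map.2 (hl.imp_of_mem ?_)
    rintro ⟨s, u⟩ ⟨_, v⟩ hu hv ⟨d, hjump, hreturn⟩ rfl
    exact hnone ⟨s, u, v, d, (hmem _ hu).1, hjump, hreturn, (hmem _ hv).2⟩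
  have := hnodup.length_le_card
  rw [List.length_map, hlen] at this
  omega

section Loop

variable {s : Q} {b : V} {g x : List V}

/-- Letters arranged in the order in which they are read need no jumps. -/
theorem Steps.exists_stepsN_zero (h : M.Steps c d) :
    ∃ x, M.StepsN (c.1, x) (d.1, []) 0 := by
  induction h using Relation.ReflTransGen.head_induction_on with
  | refl => exact ⟨[], .refl _⟩
  | @head c c' hs _ ih =>
    obtain ⟨x, hx⟩ := ih
    obtain ⟨a, ha⟩ := hs.exists_delta
    exact ⟨a :: x, .cons ha hx⟩

theorem JumpStep.exists_singleton_prefix (h : M.JumpStep c d) : ∃ b, [b] <+: c.2 := by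
  obtain ⟨_ | ⟨b, x⟩, y, a, hx, hc, -⟩ := h
  exacts [absurd rfl hx, ⟨b, x ++ a :: y, hc.symm⟩]

theorem JumpStep.singleton_prefix_and_delta_eq_none (h : M.JumpStep c d) (hb : [b] <+: c.2) :
    [b] <+: d.2 ∧ M.delta c.1 b = none := by
  obtain ⟨_ | ⟨b', x⟩, y, a, hx, hc, hd, -, hnone⟩ := h
  · exact absurd rfl hx
  · obtain rfl : b = b' := by simpa [hc] using hb
    exact ⟨⟨x ++ y, hd.symm⟩, hnone b List.mem_cons_self⟩

theorem JumpStep.exists_jumpStep_cons_cons (h : M.JumpStep c d) (hb : [b] <+: c.2) :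
    ∃ a, ∀ t, M.JumpStep (c.1, b :: a :: t) (d.1, b :: t) := by
  obtain ⟨a, ha⟩ := Step.exists_delta (.inr h)
  have hnone := (h.singleton_prefix_and_delta_eq_none hb).2
  exact ⟨a, fun t => ⟨[b], t, a, by simp, rfl, rfl, ha, by simpa using hnone⟩⟩

theorem Steps.exists_stepsN_cons (h : M.Steps c e) (hb : [b] <+: c.2) :
    ∃ g x k, g <+: [b] ∧ g <+: e.2 ∧ M.StepsN (c.1, b :: x) (e.1, g) k := by
  induction h using Relation.ReflTransGen.head_induction_on with
  | refl => exact ⟨[b], [], 0, List.prefix_rfl, hb, .refl _⟩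
  | @head c d hs hr ih =>
    rcases hs with ⟨a, hc, ha⟩ | hs
    · obtain rfl : b = a := by simpa [hc] using hb
      obtain ⟨x, hx⟩ := Steps.exists_stepsN_zero hr
      exact ⟨[], x, 0, List.nil_prefix, List.nil_prefix, .cons ha hx⟩
    · obtain ⟨g, x, k, hgb, hge, hk⟩ := ih (hs.singleton_prefix_and_delta_eq_none hb).1
      obtain ⟨a, ha⟩ := hs.exists_jumpStep_cons_cons hb
      exact ⟨g, a :: x, k + 1, hgb, hge, .jump (ha x) hk⟩

theorem JumpStep.exists_stepsN_loop {u v : List V} (h : M.JumpStep (s, u) d)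
    (hreturn : M.Steps d (s, v)) :
    ∃ g x k, x ≠ [] ∧ 0 < k ∧ g <+: v ∧ M.StepsN (s, g ++ x) (s, g) k := by
  obtain ⟨b, hb⟩ := h.exists_singleton_prefix
  have hbd := (h.singleton_prefix_and_delta_eq_none hb).1
  obtain ⟨g, x, k, ⟨r, hr⟩, hgv, hk⟩ := hreturn.exists_stepsN_cons hbd
  obtain ⟨a, ha⟩ := h.exists_jumpStep_cons_cons hb
  have hword : b :: a :: x = g ++ (r ++ a :: x) := by
    rw [← List.append_assoc, hr, List.singleton_append]
  exact ⟨g, r ++ a :: x, k + 1, by simp, k.succ_pos, hgv, hword ▸ .jump (ha x) hk⟩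

theorem StepsN.iterate (h : M.StepsN (s, g ++ x) (s, g) k) (n : ℕ) :
    M.StepsN (s, g ++ (List.replicate n x).flatten) (s, g) (n * k) := by
  induction n with
  | zero => simpa using StepsN.refl (s, g)
  | succ n ih =>
    have hfirst := h.append_right (List.replicate n x).flatten
    simpa [List.replicate_succ, Nat.succ_mul, add_comm] using hfirst.trans ih

end Loop

theorem exists_pump [Fintype Q] {w : List V} (hw : w ∈ M.lang)
    (hcard : Fintype.card Q ≤ M.jc w) :
    ∃ α β x : List V, x ≠ [] ∧ ∀ n : ℕ,
      α ++ (List.replicate n x).flatten ++ β ∈ M.lang ∧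
        n ≤ M.jc (α ++ (List.replicate n x).flatten ++ β) := by
  obtain ⟨f, hf, h⟩ := acceptsIn_jc hw
  obtain ⟨s, u, v, d, hstart, hjump, hreturn, hend⟩ := h.exists_jumpStep_and_return hcard
  obtain ⟨p, hp⟩ := hstart.exists_stepsN_zero
  obtain ⟨g, x, k, hx, hkpos, ⟨β, rfl⟩, hloop⟩ := hjump.exists_stepsN_loop hreturn
  obtain ⟨m, hm⟩ := hend.exists_stepsN
  refine ⟨p ++ g, β, x, hx, fun n => ?_⟩
  have hacc : M.AcceptsIn (p ++ g ++ (List.replicate n x).flatten ++ β) (n * k + m) := by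
    have hread := hp.append_right (g ++ (List.replicate n x).flatten ++ β)
    have hpumped := ((hloop.iterate n).append_right β).trans hm
    exact ⟨f, hf, by simpa using hread.trans hpumped⟩
  refine ⟨hacc.mem_lang, ?_⟩
  rw [hacc.jc_eq]
  exact (Nat.le_mul_of_pos_right n hkpos).trans (Nat.le_add_right _ m)

theorem exists_pos_mul_le_JC_of_pump {α β x : List V} (hx : x ≠ [])
    (h : ∀ n : ℕ, 1 ≤ n → α ++ (List.replicate n x).flatten ++ β ∈ M.lang ∧
      n ≤ M.jc (α ++ (List.replicate n x).flatten ++ β)) :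
    ∃ c : ℝ, 0 < c ∧ ∀ N : ℕ, ∃ n ≥ N,
      (∃ w ∈ M.lang, w.length = n) ∧ c * (n : ℝ) ≤ (M.JC n : ℝ) := by
  have hxpos : 0 < x.length := List.length_pos_iff.2 hx
  set C : ℕ := α.length + β.length + x.length with hC
  have hCpos : (0 : ℝ) < C := by exact_mod_cast (by omega : 0 < C)
  refine ⟨(C : ℝ)⁻¹, inv_pos.2 hCpos, fun N => ?_⟩
  obtain ⟨hmem, hjc⟩ := h (N + 1) N.succ_pos
  set w := α ++ (List.replicate (N + 1) x).flatten ++ β with hw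
  have hlen : w.length = α.length + (N + 1) * x.length + β.length := by simp [hw, add_assoc]
  have hN : N ≤ w.length := by nlinarith
  refine ⟨w.length, hN, ⟨w, hmem, rfl⟩, (inv_mul_le_iff₀ hCpos).2 ?_⟩
  have hbound : w.length ≤ C * M.JC w.length :=
    calc
      w.length ≤ C * (N + 1) := by rw [hlen, hC]; nlinarith
      _ ≤ C * M.JC w.length := Nat.mul_le_mul_left C (hjc.trans (jc_le_JC hmem))
  exact_mod_cast hbound

end DFAwtl

theorem stmt_8_general {Q V : Type*} [Fintype Q] (M : DFAwtl Q V)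
    (hw : ∃ w ∈ M.lang, Fintype.card Q ≤ M.jc w) :
    (∃ (α β x : List V), x ≠ [] ∧ ∀ n : ℕ,
        α ++ (List.replicate n x).flatten ++ β ∈ M.lang ∧
          n ≤ M.jc (α ++ (List.replicate n x).flatten ++ β)) ∧
      ∃ c : ℝ, 0 < c ∧ ∀ N : ℕ, ∃ n ≥ N,
        (∃ w ∈ M.lang, w.length = n) ∧ c * (n : ℝ) ≤ (M.JC n : ℝ) := by
  obtain ⟨w, hw, hcard⟩ := hw
  obtain ⟨α, β, x, hx, h⟩ := DFAwtl.exists_pump hw hcard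
  exact ⟨⟨α, β, x, hx, h⟩, DFAwtl.exists_pos_mul_le_JC_of_pump hx fun n _ => h n⟩

/-- if `M` accepts some input with at least `#Q` jumps, then there are
words `α, β` and a nonempty `x` such that each `α·xⁿ·β` is accepted with at least
`n` jumps; consequently `JC_M(n) ∈ Ω(n)`. -/
theorem stmt_8 {Q V : Type*} [Fintype Q] [Fintype V] (M : DFAwtl Q V)
    (hw : ∃ w ∈ M.lang, Fintype.card Q ≤ M.jc w) :
    (∃ (α β x : List V), x ≠ [] ∧ ∀ n : ℕ, 1 ≤ n →
        α ++ (List.replicate n x).flatten ++ β ∈ M.lang ∧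
          n ≤ M.jc (α ++ (List.replicate n x).flatten ++ β)) ∧
      ∃ c : ℝ, 0 < c ∧ ∀ N : ℕ, ∃ n ≥ N,
        (∃ w ∈ M.lang, w.length = n) ∧ c * (n : ℝ) ≤ (M.JC n : ℝ) := by
  obtain ⟨⟨α, β, x, hx, h⟩, hJC⟩ := stmt_8_general M hw
  exact ⟨⟨α, β, x, hx, fun n _ => h n⟩, hJC⟩
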